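/- Let μ > −1, −μ−1 < ν ≤ 0 and 0 < β < 1. Then for all x > 0, ∫_0^x e^{−βu} u^ν t̃_{μ+1,ν+1}(u) du > (1/(1−β)) · ( e^{−βx} x^ν t̃_{μ,ν}(x) − B_{μ,ν,β}(x) ). -/

import Mathlib

/-!
Write `s = μ + ν + 1 > 0`, `a = (μ - ν + 3) / 2`, `b = (μ + ν + 3) / 2`, so that `a - b = -ν ≥ 0`, and
let `P(z) = ∑ z ^ k / (Γ(k + a) Γ(k + b))`, `Q(z) = ∑ z ^ k / (Γ(k + a) Γ(k + b + 1))`. Up to explicit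
powers of `u` and of `2`, `P(u² / 4)` is `lommel μ ν u` and `Q(u² / 4)` is `lommel (μ + 1) (ν + 1) u`.

The functional equation of `Γ` gives `z P' = z Q + 1 / (Γ(a - 1) Γ(b)) - (a - 1) P`
(`hasDerivAt_lommelSeries`), hence, with `f u = u ^ ν * lommel μ ν u` and
`g u = u ^ ν * lommel (μ + 1) (ν + 1) u`, a formula `f' = g + 2 ν f / u + c u ^ (μ + ν)`. Integrating
`(e ^ (-β u) f)'` over `[0, x]`, where `f 0 = 0` because `s > 0`, and recognising
`Bconst μ ν β x = c ∫ e ^ (-β u) u ^ (μ + ν)`, the claim becomes positivity of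
`∫ e ^ (-β u) (β (f - g) - 2 ν f / u)`.

The integrand is positive pointwise, because `g < (1 - 2 ν / u) f` (this is `key_ineq`), `0 < β < 1` and
`ν ≤ 0`. The simpler bound
`g < f` fails for `ν < -1/2` and large `u`, so the term `-2 ν f / u` has to be kept.
-/

open Real MeasureTheory

/-- Normalised modified Lommel function of the first kind. -/
noncomputable def lommel (μ ν x : ℝ) : ℝ :=
  ∑' k : ℕ, (x / 2) ^ (μ + 2 * (k : ℝ) + 1) /
    (Real.Gamma ((k : ℝ) + (μ - ν + 3) / 2) * Real.Gamma ((k : ℝ) + (μ + ν + 3) / 2))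

/-- Lower incomplete gamma function. -/
noncomputable def lowerGamma (a x : ℝ) : ℝ :=
  ∫ u in (0:ℝ)..x, Real.exp (-u) * u ^ (a - 1)

noncomputable def Bconst (μ ν β x : ℝ) : ℝ :=
  β ^ (-μ - ν - 1) * lowerGamma (μ + ν + 1) (β * x) /
    (2 ^ μ * Real.Gamma ((μ - ν + 1) / 2) * Real.Gamma ((μ + ν + 3) / 2))

/-- The coefficient `1 / (Γ(k + a) Γ(k + b))` of the power series underlying `lommel`. -/
noncomputable def lommelCoeff (a b : ℝ) (k : ℕ) : ℝ :=
  1 / (Real.Gamma ((k : ℝ) + a) * Real.Gamma ((k : ℝ) + b))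

/-- The entire series `∑ z ^ k / (Γ(k + a) Γ(k + b))`, to be evaluated at `z = (u / 2) ^ 2`. -/
noncomputable def lommelSeries (a b z : ℝ) : ℝ := ∑' k : ℕ, lommelCoeff a b k * z ^ k

lemma lommelCoeff_pos {a b : ℝ} (ha : 0 < a) (hb : 0 < b) (k : ℕ) : 0 < lommelCoeff a b k := by
  unfold lommelCoeff
  have := Real.Gamma_pos_of_pos (show 0 < (k : ℝ) + a by positivity)
  have := Real.Gamma_pos_of_pos (show 0 < (k : ℝ) + b by positivity)
  positivity

lemma lommelCoeff_succ {a b : ℝ} (ha : 0 < a) (hb : 0 < b) (k : ℕ) :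
    lommelCoeff a b (k + 1) = lommelCoeff a b k / (((k : ℝ) + a) * ((k : ℝ) + b)) := by
  have h1 : 0 < (k : ℝ) + a := by positivity
  have h2 : 0 < (k : ℝ) + b := by positivity
  have e1 : ((k + 1 : ℕ) : ℝ) + a = ((k : ℝ) + a) + 1 := by push_cast; ring
  have e2 : ((k + 1 : ℕ) : ℝ) + b = ((k : ℝ) + b) + 1 := by push_cast; ring
  unfold lommelCoeff
  rw [e1, e2, Real.Gamma_add_one h1.ne', Real.Gamma_add_one h2.ne']
  have := Real.Gamma_pos_of_pos h1
  have := Real.Gamma_pos_of_pos h2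
  field_simp

lemma lommelCoeff_add_one_right {a b : ℝ} (hb : 0 < b) (k : ℕ) :
    lommelCoeff a (b + 1) k = lommelCoeff a b k / ((k : ℝ) + b) := by
  have h2 : 0 < (k : ℝ) + b := by positivity
  unfold lommelCoeff
  rw [← add_assoc, Real.Gamma_add_one h2.ne', div_div]
  congr 1
  ring

lemma summable_lommelCoeff {a b : ℝ} (ha : 0 < a) (hb : 0 < b) (z : ℝ) :
    Summable fun k : ℕ => lommelCoeff a b k * z ^ k := by
  rcases eq_or_ne z 0 with rfl | hz
  · refine summable_of_ne_finset_zero (s := {0}) ?_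
    intro k hk
    have : k ≠ 0 := by simpa using hk
    simp [this]
  · refine summable_of_ratio_test_tendsto_lt_one (l := 0) zero_lt_one ?_ ?_
    · exact Filter.Eventually.of_forall fun k =>
        mul_ne_zero (lommelCoeff_pos ha hb k).ne' (pow_ne_zero _ hz)
    · have hlim : Filter.Tendsto (fun k : ℕ => |z| / (((k : ℝ) + a) * ((k : ℝ) + b)))
          Filter.atTop (nhds 0) := by
        refine Filter.Tendsto.const_div_atTop ?_ _
        exact (Filter.tendsto_atTop_add_const_right _ _ tendsto_natCast_atTop_atTop).atTop_mul_atTop₀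
          (Filter.tendsto_atTop_add_const_right _ _ tendsto_natCast_atTop_atTop)
      refine hlim.congr fun k => ?_
      have h1 : 0 < (k : ℝ) + a := by positivity
      have h2 : 0 < (k : ℝ) + b := by positivity
      have hc := lommelCoeff_pos ha hb k
      have hz' : 0 < |z| := abs_pos.mpr hz
      rw [lommelCoeff_succ ha hb, Real.norm_eq_abs, Real.norm_eq_abs, abs_mul, abs_mul, abs_div,
        abs_pow, abs_pow, abs_of_pos hc, abs_of_pos (mul_pos h1 h2)]
      field_simp
      ring

lemma lommelSeries_pos {a b z : ℝ} (ha : 0 < a) (hb : 0 < b) (hz : 0 < z) :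
    0 < lommelSeries a b z :=
  (summable_lommelCoeff ha hb z).tsum_pos
    (fun k => (mul_pos (lommelCoeff_pos ha hb k) (pow_pos hz k)).le) 0
    (mul_pos (lommelCoeff_pos ha hb 0) (pow_pos hz 0))

/-- The factor `k` produced by termwise differentiation is absorbed by `k ≤ 2 ^ k`. -/
lemma summable_deriv_lommelCoeff {a b : ℝ} (ha : 0 < a) (hb : 0 < b) {R : ℝ} (hR : 0 < R) :
    Summable fun k : ℕ => lommelCoeff a b k * ((k : ℝ) * R ^ (k - 1)) := by
  refine Summable.of_nonneg_of_le (fun k => ?_) (fun k => ?_)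
    ((summable_lommelCoeff ha hb (2 * R)).mul_right R⁻¹)
  · have := lommelCoeff_pos ha hb k
    positivity
  · have hc := lommelCoeff_pos ha hb k
    rw [mul_assoc]
    refine mul_le_mul_of_nonneg_left ?_ hc.le
    rcases k with _ | k
    · simp [hR.le]
    · have h2 : (((k + 1 : ℕ)) : ℝ) ≤ 2 ^ (k + 1) := by exact_mod_cast (Nat.lt_two_pow_self).le
      have e : (2 * R) ^ (k + 1) * R⁻¹ = 2 ^ (k + 1) * R ^ k := by
        rw [mul_pow, pow_succ R]; field_simp
      rw [e]
      exact mul_le_mul_of_nonneg_right h2 (by positivity)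

lemma hasDerivAt_lommelSeries_tsum {a b : ℝ} (ha : 0 < a) (hb : 0 < b) (z : ℝ) :
    HasDerivAt (lommelSeries a b) (∑' k : ℕ, lommelCoeff a b k * ((k : ℝ) * z ^ (k - 1))) z := by
  have hR : 0 < |z| + 1 := by positivity
  have hbound : ∀ (k : ℕ), ∀ y ∈ Metric.ball (0 : ℝ) (|z| + 1),
      ‖lommelCoeff a b k * ((k : ℝ) * y ^ (k - 1))‖
        ≤ lommelCoeff a b k * ((k : ℝ) * (|z| + 1) ^ (k - 1)) := by
    intro k y hy
    have hy' : |y| ≤ |z| + 1 := by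
      have : |y| < |z| + 1 := by simpa using hy
      exact this.le
    have hc := lommelCoeff_pos ha hb k
    rw [Real.norm_eq_abs, abs_mul, abs_mul, abs_pow, abs_of_pos hc, Nat.abs_cast]
    gcongr
  exact hasDerivAt_tsum_of_isPreconnected
    (g := fun (k : ℕ) (y : ℝ) => lommelCoeff a b k * y ^ k)
    (g' := fun (k : ℕ) (y : ℝ) => lommelCoeff a b k * ((k : ℝ) * y ^ (k - 1)))
    (summable_deriv_lommelCoeff ha hb hR) Metric.isOpen_ball
    (convex_ball _ _).isPreconnected (fun k y _ => (hasDerivAt_pow k y).const_mul _) hbound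
    (Metric.mem_ball_self hR) (summable_lommelCoeff ha hb 0) (by simp)

/-- Coefficientwise, `k = (k + a - 1) - (a - 1)`, and the factor `k + a - 1` lowers the argument of one
`Γ` by one; for `k ≥ 1` this produces a shifted term of `lommelSeries a (b + 1)`. -/
lemma hasDerivAt_lommelSeries {a b : ℝ} (ha : 1 < a) (hb : 0 < b) {z : ℝ} (hz : z ≠ 0) :
    HasDerivAt (lommelSeries a b)
      ((z * lommelSeries a (b + 1) z + 1 / (Real.Gamma (a - 1) * Real.Gamma b)
        - (a - 1) * lommelSeries a b z) / z) z := by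
  have ha0 : 0 < a := by linarith
  convert hasDerivAt_lommelSeries_tsum ha0 hb z using 1
  rw [div_eq_iff hz, ← tsum_mul_right]
  have hsP := summable_lommelCoeff ha0 hb z
  have hsQ := summable_lommelCoeff ha0 (show 0 < b + 1 by linarith) z
  have e : ∀ k : ℕ, lommelCoeff a b k * ((k : ℝ) * z ^ (k - 1)) * z
      = (k : ℝ) * (lommelCoeff a b k * z ^ k) := by
    intro k
    rcases k with _ | k
    · simp
    · rw [Nat.add_sub_cancel, pow_succ]; ring
  have estep : ∀ k : ℕ, ((k + 1 : ℕ) : ℝ) * (lommelCoeff a b (k + 1) * z ^ (k + 1))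
      = z * (lommelCoeff a (b + 1) k * z ^ k)
        - (a - 1) * (lommelCoeff a b (k + 1) * z ^ (k + 1)) := by
    intro k
    have h1 : 0 < (k : ℝ) + a := by positivity
    have h2 : 0 < (k : ℝ) + b := by positivity
    rw [lommelCoeff_succ ha0 hb, lommelCoeff_add_one_right hb]
    push_cast
    field_simp
    ring
  have hs1 : Summable fun k : ℕ => lommelCoeff a b (k + 1) * z ^ (k + 1) :=
    (summable_nat_add_iff 1).mpr hsP
  have hs2 : Summable fun k : ℕ => ((k + 1 : ℕ) : ℝ) * (lommelCoeff a b (k + 1) * z ^ (k + 1)) := by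
    simp_rw [estep]
    exact (hsQ.mul_left z).sub (hs1.mul_left (a - 1))
  have hs3 : Summable fun k : ℕ => (k : ℝ) * (lommelCoeff a b k * z ^ k) :=
    (summable_nat_add_iff 1).mp hs2
  simp_rw [e]
  rw [hs3.tsum_eq_zero_add]
  simp_rw [estep]
  rw [(hsQ.mul_left z).tsum_sub (hs1.mul_left (a - 1)), tsum_mul_left, tsum_mul_left]
  have hP : lommelSeries a b z = lommelCoeff a b 0 * z ^ 0
      + ∑' k : ℕ, lommelCoeff a b (k + 1) * z ^ (k + 1) := hsP.tsum_eq_zero_add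
  have h0 : 1 / (Real.Gamma (a - 1) * Real.Gamma b) = (a - 1) * lommelCoeff a b 0 := by
    have ha1 : 0 < a - 1 := by linarith
    have hg : Real.Gamma a = (a - 1) * Real.Gamma (a - 1) := by
      rw [← Real.Gamma_add_one ha1.ne']; congr 1; ring
    have := Real.Gamma_pos_of_pos ha1
    have := Real.Gamma_pos_of_pos hb
    simp only [lommelCoeff, Nat.cast_zero, zero_add, hg]
    field_simp
  rw [h0, hP]
  simp only [lommelSeries]
  simp
  ring

lemma continuous_lommelSeries {a b : ℝ} (ha : 0 < a) (hb : 0 < b) :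
    Continuous (lommelSeries a b) :=
  continuous_iff_continuousAt.mpr fun z => (hasDerivAt_lommelSeries_tsum ha hb z).continuousAt

/-- With `A k = y ^ (2 k) / (Γ(k + a) Γ(k + b))`, so that `A (k + 1) = A k * y² / ((k + a) (k + b))`, the
inequality holds termwise in the form `y² A k / (k + b) ≤ y (A k + A (k + 1)) / 2 + (a - b) A (k + 1)`;
after simplification that is the arithmetic-geometric mean inequality
`y / (k + a) ≤ (1 + y² / ((k + a) (k + b))) / 2`. The unused part of `A 0` makes the sum strict. -/
lemma key_ineq {a b y : ℝ} (hb : 0 < b) (hab : b ≤ a) (hy : 0 < y) :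
    y ^ 2 * lommelSeries a (b + 1) (y ^ 2) < (y + (a - b)) * lommelSeries a b (y ^ 2) := by
  have ha0 : 0 < a := by linarith
  have hsP := summable_lommelCoeff ha0 hb (y ^ 2)
  have hsQ := summable_lommelCoeff ha0 (show 0 < b + 1 by linarith) (y ^ 2)
  have hs1 : Summable fun k : ℕ => lommelCoeff a b (k + 1) * (y ^ 2) ^ (k + 1) :=
    (summable_nat_add_iff 1).mpr hsP
  have hP : lommelSeries a b (y ^ 2) = lommelCoeff a b 0 * (y ^ 2) ^ 0
      + ∑' k : ℕ, lommelCoeff a b (k + 1) * (y ^ 2) ^ (k + 1) := hsP.tsum_eq_zero_add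
  have hterm : ∀ k : ℕ, y ^ 2 * (lommelCoeff a (b + 1) k * (y ^ 2) ^ k)
      ≤ y / 2 * (lommelCoeff a b k * (y ^ 2) ^ k)
        + (y / 2 + (a - b)) * (lommelCoeff a b (k + 1) * (y ^ 2) ^ (k + 1)) := by
    intro k
    have h1 : 0 < (k : ℝ) + a := by positivity
    have h2 : 0 < (k : ℝ) + b := by positivity
    have hc := lommelCoeff_pos ha0 hb k
    rw [lommelCoeff_succ ha0 hb, lommelCoeff_add_one_right hb, pow_succ (y ^ 2) k, ← sub_nonneg]
    have e : y / 2 * (lommelCoeff a b k * (y ^ 2) ^ k)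
        + (y / 2 + (a - b)) * (lommelCoeff a b k / (((k : ℝ) + a) * ((k : ℝ) + b))
          * ((y ^ 2) ^ k * y ^ 2))
        - y ^ 2 * (lommelCoeff a b k / ((k : ℝ) + b) * (y ^ 2) ^ k)
        = lommelCoeff a b k * (y ^ 2) ^ k * y / (2 * (((k : ℝ) + a) * ((k : ℝ) + b)))
          * ((k + b - y) ^ 2 + (k + b) * (a - b)) := by
      field_simp
      ring
    rw [e]
    have : 0 ≤ a - b := by linarith
    positivity
  have hle := Summable.tsum_le_tsum hterm (hsQ.mul_left _)
    ((hsP.mul_left _).add (hs1.mul_left _))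
  rw [(hsP.mul_left _).tsum_add (hs1.mul_left _), tsum_mul_left, tsum_mul_left, tsum_mul_left] at hle
  have hA0 := lommelCoeff_pos ha0 hb 0
  have hfin : (y / 2 + (a - b)) * (∑' k : ℕ, lommelCoeff a b (k + 1) * (y ^ 2) ^ (k + 1))
      < (y / 2 + (a - b)) * lommelSeries a b (y ^ 2) := by
    refine mul_lt_mul_of_pos_left ?_ (by linarith)
    rw [hP]
    simp only [pow_zero, mul_one]
    linarith
  simp only [lommelSeries] at hfin ⊢
  linarith

lemma rpow_mul_lommel {μ ν u : ℝ} (hu : 0 < u) :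
    u ^ ν * lommel μ ν u = (2 : ℝ) ^ (-(μ + 1)) * (u ^ (μ + ν + 1)
      * lommelSeries ((μ - ν + 3) / 2) ((μ + ν + 3) / 2) ((u / 2) ^ 2)) := by
  unfold lommel lommelSeries
  rw [← tsum_mul_left, ← tsum_mul_left, ← tsum_mul_left]
  refine tsum_congr fun k => ?_
  have hu2 : 0 < u / 2 := by positivity
  have e1 : (u / 2) ^ (μ + 2 * (k : ℝ) + 1) = (u / 2) ^ (μ + 1) * ((u / 2) ^ 2) ^ k := by
    rw [← pow_mul, ← Real.rpow_natCast, ← Real.rpow_add hu2]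
    congr 1
    push_cast
    ring
  have e2 : u ^ (μ + ν + 1) = u ^ ν * u ^ (μ + 1) := by
    rw [← Real.rpow_add hu]; congr 1; ring
  rw [e1, e2, Real.div_rpow hu.le (by norm_num), Real.rpow_neg (by norm_num)]
  unfold lommelCoeff
  rw [div_eq_mul_inv (u ^ (μ + 1))]
  ring

lemma Bconst_eq {μ ν β x : ℝ} (hβ : 0 < β) (hx : 0 < x) :
    Bconst μ ν β x = ∫ u in (0:ℝ)..x, u ^ (μ + ν) * (Real.exp (-β * u) * (2 ^ (-(μ + 1)) *
      (2 * (1 / (Real.Gamma ((μ - ν + 1) / 2) * Real.Gamma ((μ + ν + 3) / 2)))))) := by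
  have hsub := intervalIntegral.integral_comp_mul_left (a := 0) (b := x)
    (fun u : ℝ => Real.exp (-u) * u ^ (μ + ν + 1 - 1)) hβ.ne'
  have hγ : lowerGamma (μ + ν + 1) (β * x)
      = β ^ (μ + ν + 1) * ∫ u in (0:ℝ)..x, u ^ (μ + ν) * Real.exp (-β * u) := by
    have h1 : lowerGamma (μ + ν + 1) (β * x)
        = β * ∫ u in (0:ℝ)..x, Real.exp (-(β * u)) * (β * u) ^ (μ + ν + 1 - 1) := by
      rw [hsub, mul_zero, smul_eq_mul, mul_inv_cancel_left₀ hβ.ne']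
      rfl
    rw [h1, ← intervalIntegral.integral_const_mul, ← intervalIntegral.integral_const_mul]
    refine intervalIntegral.integral_congr fun u hu => ?_
    rw [Set.uIcc_of_le hx.le] at hu
    simp only [add_sub_cancel_right]
    rw [Real.mul_rpow hβ.le hu.1, Real.rpow_add_one hβ.ne', neg_mul]
    ring
  have h2 : (2 : ℝ) ^ (-(μ + 1)) * 2 = (2 ^ μ)⁻¹ := by
    rw [← Real.rpow_add_one (by norm_num), ← Real.rpow_neg (by norm_num)]
    congr 1
    ring
  have h3 : β ^ (-μ - ν - 1) * β ^ (μ + ν + 1) = 1 := by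
    rw [← Real.rpow_add hβ, show -μ - ν - 1 + (μ + ν + 1) = 0 by ring, Real.rpow_zero]
  have h4 : ∀ u : ℝ, u ^ (μ + ν) * (Real.exp (-β * u) * (2 ^ (-(μ + 1)) *
      (2 * (1 / (Real.Gamma ((μ - ν + 1) / 2) * Real.Gamma ((μ + ν + 3) / 2))))))
      = (u ^ (μ + ν) * Real.exp (-β * u)) * ((2 ^ μ)⁻¹ *
        (1 / (Real.Gamma ((μ - ν + 1) / 2) * Real.Gamma ((μ + ν + 3) / 2)))) := by
    intro u
    rw [← h2]
    ring
  simp_rw [h4]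
  rw [intervalIntegral.integral_mul_const, Bconst, hγ, ← mul_assoc, h3, one_mul]
  rw [div_eq_mul_inv, mul_inv, mul_inv, one_div, mul_inv]
  ring

theorem stmt8 (μ ν β : ℝ) (hμ : μ > -1) (hν1 : -μ - 1 < ν) (hν2 : ν ≤ 0)
    (hβ1 : 0 < β) (hβ2 : β < 1) :
    ∀ x : ℝ, 0 < x →
      ∫ u in (0:ℝ)..x, Real.exp (-β * u) * u ^ ν * lommel (μ + 1) (ν + 1) u >
        1 / (1 - β) * (Real.exp (-β * x) * x ^ ν * lommel μ ν x - Bconst μ ν β x) := by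
  intro x hx
  set a : ℝ := (μ - ν + 3) / 2 with ha_def
  set b : ℝ := (μ + ν + 3) / 2 with hb_def
  have ha : 1 < a := by rw [ha_def]; linarith
  have hb : 0 < b := by rw [hb_def]; linarith
  have hab : b ≤ a := by rw [ha_def, hb_def]; linarith
  have ha0 : 0 < a := by linarith
  set K : ℝ := (2 : ℝ) ^ (-(μ + 1)) with hK_def
  have hK : 0 < K := by positivity
  set d : ℝ := 1 / (Real.Gamma ((μ - ν + 1) / 2) * Real.Gamma b) with hd_def
  have hcP : Continuous fun u : ℝ => lommelSeries a b ((u / 2) ^ 2) :=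
    (continuous_lommelSeries ha0 hb).comp (by fun_prop)
  have hcQ : Continuous fun u : ℝ => lommelSeries a (b + 1) ((u / 2) ^ 2) :=
    (continuous_lommelSeries ha0 (by linarith)).comp (by fun_prop)
  set P : ℝ → ℝ := fun u => lommelSeries a b ((u / 2) ^ 2) with hP_def
  set Q : ℝ → ℝ := fun u => lommelSeries a (b + 1) ((u / 2) ^ 2) with hQ_def
  -- Since `μ + ν > -1`, the weight `u ^ (μ + ν)` is integrable at `0`.
  have hint : ∀ φ : ℝ → ℝ, Continuous φ →
      IntervalIntegrable (fun u => u ^ (μ + ν) * φ u) volume 0 x := fun φ hφ =>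
    (intervalIntegral.intervalIntegrable_rpow' (by linarith)).mul_continuousOn hφ.continuousOn
  set G : ℝ → ℝ := fun u => Real.exp (-β * u) * (K * (u ^ 2 / 2 * Q u)) with hG_def
  set D : ℝ → ℝ := fun u => Real.exp (-β * u) *
    (K * (-β * u * P u + 2 * ν * P u + u ^ 2 / 2 * Q u + 2 * d)) with hD_def
  set C : ℝ → ℝ := fun u => Real.exp (-β * u) * (K * (2 * d)) with hC_def
  have hGc : Continuous G := by fun_prop
  have hDc : Continuous D := by fun_prop
  have hCc : Continuous C := by fun_prop
  have hleft : ∫ u in (0:ℝ)..x, Real.exp (-β * u) * u ^ ν * lommel (μ + 1) (ν + 1) u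
      = ∫ u in (0:ℝ)..x, u ^ (μ + ν) * G u := by
    refine intervalIntegral.integral_congr_ae (Filter.Eventually.of_forall fun u hu => ?_)
    rw [Set.uIoc_of_le hx.le] at hu
    have hu0 : 0 < u := hu.1
    have h1 := rpow_mul_lommel (μ := μ + 1) (ν := ν + 1) hu0
    rw [Real.rpow_add_one hu0.ne', show (μ + 1 - (ν + 1) + 3) / 2 = a by rw [ha_def]; ring,
      show (μ + 1 + (ν + 1) + 3) / 2 = b + 1 by rw [hb_def]; ring,
      show μ + 1 + (ν + 1) + 1 = μ + ν + 1 + 1 + 1 by ring,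
      Real.rpow_add_one hu0.ne', Real.rpow_add_one hu0.ne', Real.rpow_add_one hu0.ne'] at h1
    have h2 : (2 : ℝ) ^ (-(μ + 1 + 1)) = K / 2 := by
      rw [hK_def, eq_div_iff two_ne_zero, ← Real.rpow_add_one two_ne_zero]
      congr 1
      ring
    rw [h2] at h1
    have h3 : u ^ ν * lommel (μ + 1) (ν + 1) u = u ^ (μ + ν) * (K * (u ^ 2 / 2 * Q u)) := by
      apply mul_right_cancel₀ hu0.ne'
      simp only [hQ_def]
      linear_combination h1
    simp only [hG_def]
    rw [mul_assoc, h3]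
    ring
  set F : ℝ → ℝ := fun u => Real.exp (-β * u) * (K * (u ^ (μ + ν + 1) * P u)) with hF_def
  have hF0 : F 0 = 0 := by
    simp only [hF_def]
    rw [Real.zero_rpow (by linarith)]
    ring
  have hFx : Real.exp (-β * x) * x ^ ν * lommel μ ν x = F x := by
    rw [mul_assoc, rpow_mul_lommel hx]
  have hderiv : ∀ u ∈ Set.Ioo 0 x, HasDerivAt F (u ^ (μ + ν) * D u) u := by
    intro u hu
    have hu0 : 0 < u := hu.1
    have hz : (u / 2) ^ 2 ≠ 0 := by positivity
    have dz : HasDerivAt (fun u : ℝ => (u / 2) ^ 2) (u / 2) u := by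
      refine HasDerivAt.congr_deriv (((hasDerivAt_id u).div_const 2).pow 2) ?_
      simp
      ring
    have dP := (hasDerivAt_lommelSeries ha hb hz).comp u dz
    have dw := Real.hasDerivAt_rpow_const (x := u) (p := μ + ν + 1) (Or.inl hu0.ne')
    have de : HasDerivAt (fun u : ℝ => Real.exp (-β * u)) (Real.exp (-β * u) * (-β)) u := by
      simpa using ((hasDerivAt_id u).const_mul (-β)).exp
    have hd' : 1 / (Real.Gamma (a - 1) * Real.Gamma b) = d := by
      rw [hd_def, show a - 1 = (μ - ν + 1) / 2 by rw [ha_def]; ring]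
    rw [hd'] at dP
    refine HasDerivAt.congr_deriv (de.mul ((dw.mul dP).const_mul K)) ?_
    simp only [hD_def, Function.comp, hP_def, hQ_def]
    rw [add_sub_cancel_right, Real.rpow_add_one hu0.ne', ha_def]
    field_simp
    ring
  have hFc : Continuous F := by
    have : Continuous fun u : ℝ => u ^ (μ + ν + 1) :=
      Real.continuous_rpow_const (by linarith)
    fun_prop
  have hFTC := intervalIntegral.integral_eq_sub_of_hasDerivAt_of_le hx.le hFc.continuousOn hderiv
    (hint D hDc)
  rw [hF0, sub_zero] at hFTC
  have hB : Bconst μ ν β x = ∫ u in (0:ℝ)..x, u ^ (μ + ν) * C u := Bconst_eq hβ1 hx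
  have hpos : 0 < ∫ u in (0:ℝ)..x,
      ((1 - β) * (u ^ (μ + ν) * G u) - (u ^ (μ + ν) * D u - u ^ (μ + ν) * C u)) := by
    refine intervalIntegral.intervalIntegral_pos_of_pos_on
      (((hint G hGc).const_mul _).sub ((hint D hDc).sub (hint C hCc))) (fun u hu => ?_) hx
    have hu0 : 0 < u := hu.1
    have hkey := key_ineq hb hab (show 0 < u / 2 by positivity)
    have hPpos : 0 < P u := lommelSeries_pos ha0 hb (by positivity)
    have hkey' : u ^ 2 / 2 * Q u < (u - 2 * ν) * P u := by
      rw [show a - b = -ν by rw [ha_def, hb_def]; ring] at hkey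
      simp only [hP_def, hQ_def]
      linarith
    have e : (1 - β) * (u ^ (μ + ν) * G u) - (u ^ (μ + ν) * D u - u ^ (μ + ν) * C u)
        = u ^ (μ + ν) * Real.exp (-β * u) * K *
          (β * ((u - 2 * ν) * P u - u ^ 2 / 2 * Q u) + (1 - β) * (-ν) * 2 * P u) := by
      simp only [hG_def, hD_def, hC_def]
      ring
    rw [e]
    have h1 : 0 < β * ((u - 2 * ν) * P u - u ^ 2 / 2 * Q u) := mul_pos hβ1 (by linarith)
    have h2 : 0 ≤ (1 - β) * (-ν) * 2 * P u := by
      have : 0 ≤ 1 - β := by linarith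
      have : 0 ≤ -ν := by linarith
      positivity
    have h3 : 0 < u ^ (μ + ν) := Real.rpow_pos_of_pos hu0 _
    have h4 := Real.exp_pos (-β * u)
    exact mul_pos (mul_pos (mul_pos h3 h4) hK) (by linarith)
  rw [intervalIntegral.integral_sub ((hint G hGc).const_mul _) ((hint D hDc).sub (hint C hCc)),
    intervalIntegral.integral_sub (hint D hDc) (hint C hCc),
    intervalIntegral.integral_const_mul, hFTC, ← hB, ← hleft, ← hFx] at hpos
  have hβ3 : 0 < 1 - β := by linarith
  rw [gt_iff_lt, one_div, inv_mul_lt_iff₀ hβ3]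
  linarith
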